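/- A recognizable language S ⊆ A* is completely reducible over ℚ if and only if its characteristic series 𝟙_S is a ℚ-linear combination of characteristic series of birecurrent languages. -/

import Mathlib

namespace Birec

variable {A : Type*}

/-- The left quotient `u⁻¹S = {v | u v ∈ S}`. -/
def leftQuot (S : Set (List A)) (u : List A) : Set (List A) := {v | u ++ v ∈ S}

/-- A language is recognizable iff it has finitely many left quotients (Nerode). -/
def Recognizable (S : Set (List A)) : Prop := (Set.range (leftQuot S)).Finite

/-- The reversal `S̃` of a language. -/
def langRev (S : Set (List A)) : Set (List A) := {w | w.reverse ∈ S}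

/-- A recognizable set is recurrent if its minimal automaton (whose states are the
nonempty left quotients) is strongly connected. -/
def Recurrent (S : Set (List A)) : Prop :=
  Recognizable S ∧
    ∀ u v : List A, (leftQuot S u).Nonempty → (leftQuot S v).Nonempty →
      ∃ w : List A, leftQuot S (u ++ w) = leftQuot S v

/-- A set is birecurrent if it is recurrent together with its reversal. -/
def Birecurrent (S : Set (List A)) : Prop := Recurrent S ∧ Recurrent (langRev S)

/-- A set is dense if every word is a factor of one of its words. -/
def LangDense (S : Set (List A)) : Prop := ∀ v : List A, ∃ u w : List A, u ++ v ++ w ∈ S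

end Birec
namespace Birec

variable {A : Type*}

/-- The characteristic series of a language, as a function `A* → ℚ`. -/
noncomputable def charFun (S : Set (List A)) : List A → ℚ := S.indicator 1

/-- The shift operator `τ ↦ τ · u`, where `(τ · u)(v) = τ(u v)`; this is the linear
action underlying the syntactic representation. -/
def shiftOp (u : List A) : (List A → ℚ) →ₗ[ℚ] (List A → ℚ) where
  toFun τ := fun v => τ (u ++ v)
  map_add' := fun _ _ => rfl
  map_smul' := fun _ _ => rfl

/-- The syntactic space of a series `σ`: the subspace of `ℚ⟨⟨A⟩⟩` spanned by the
series `σ · u` for `u ∈ A*`. -/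
def synSpace (σ : List A → ℚ) : Submodule ℚ (List A → ℚ) :=
  Submodule.span ℚ (Set.range fun u : List A => shiftOp u σ)

/-- A subspace is invariant if it is stable under all shift operators. -/
def InvariantSub (W : Submodule ℚ (List A → ℚ)) : Prop :=
  ∀ τ ∈ W, ∀ u : List A, shiftOp u τ ∈ W

/-- An invariant subspace is irreducible if it is nonzero and has no nontrivial
invariant subspace. -/
def IrreducibleSub (W : Submodule ℚ (List A → ℚ)) : Prop :=
  W ≠ ⊥ ∧ ∀ W' : Submodule ℚ (List A → ℚ), W' ≤ W → InvariantSub W' → W' = ⊥ ∨ W' = W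

/-- A series is completely reducible if its syntactic space is a direct sum of
invariant irreducible subspaces (equivalently, its syntactic representation is a
direct sum of irreducible representations). -/
def CompletelyReducibleSeries (σ : List A → ℚ) : Prop :=
  ∃ (n : ℕ) (W : Fin n → Submodule ℚ (List A → ℚ)),
    (∀ i, W i ≤ synSpace σ ∧ InvariantSub (W i) ∧ IrreducibleSub (W i)) ∧
    iSupIndep W ∧ (⨆ i, W i) = synSpace σ

/-- A language is completely reducible if its characteristic series is. -/
noncomputable def CompletelyReducibleLang (S : Set (List A)) : Prop :=
  CompletelyReducibleSeries (charFun S)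

/-- The rank of the element `ψ_σ(u)` of the syntactic monoid, i.e. the dimension of the
image of the syntactic space under the shift by `u`. -/
noncomputable def psiRank (σ : List A → ℚ) (u : List A) : ℕ :=
  Module.finrank ℚ ↥(Submodule.map (shiftOp u) (synSpace σ))

/-- `u` induces an element of minimal nonzero rank of the syntactic monoid. -/
def IsMinNonzeroPsiRank (σ : List A → ℚ) (u : List A) : Prop :=
  psiRank σ u ≠ 0 ∧ ∀ v : List A, psiRank σ v ≠ 0 → psiRank σ u ≤ psiRank σ v

/-- The eventual kernel `EK(S)`: the intersection (inside the syntactic space) of the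
kernels of all elements of minimal nonzero rank of the syntactic monoid. -/
noncomputable def EK (S : Set (List A)) : Submodule ℚ (List A → ℚ) :=
  synSpace (charFun S) ⊓
    ⨅ u ∈ {u : List A | IsMinNonzeroPsiRank (charFun S) u}, LinearMap.ker (shiftOp u)

/-- The eventual range `ER(S)`: the subspace spanned by the images of all elements of
minimal nonzero rank of the syntactic monoid. -/
noncomputable def ER (S : Set (List A)) : Submodule ℚ (List A → ℚ) :=
  ⨆ u ∈ {u : List A | IsMinNonzeroPsiRank (charFun S) u},
    Submodule.map (shiftOp u) (synSpace (charFun S))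

end Birec
namespace Birec

variable {A : Type*}

/-- A series is rational with a finite set of coefficients iff it has finitely many
left quotients `u⁻¹σ` (Nerode criterion for series). -/
def SeriesRecognizable (σ : List A → ℚ) : Prop :=
  (Set.range fun u : List A => (shiftOp u σ : List A → ℚ)).Finite

/-- A rational series with a finite set of coefficients is recurrent if its minimal
deterministic automaton with scalar output function, whose states are the nonzero
quotients `u⁻¹σ`, is strongly connected. -/
def SeriesRecurrent (σ : List A → ℚ) : Prop :=
  SeriesRecognizable σ ∧
    ∀ u v : List A, shiftOp u σ ≠ 0 → shiftOp v σ ≠ 0 →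
      ∃ w : List A, shiftOp (u ++ w) σ = shiftOp v σ

/-- The reversal of a series. -/
def seriesRev (σ : List A → ℚ) : List A → ℚ := fun w => σ w.reverse

/-- A series is birecurrent if both it and its reversal are recurrent. -/
def SeriesBirecurrent (σ : List A → ℚ) : Prop :=
  SeriesRecurrent σ ∧ SeriesRecurrent (seriesRev σ)

end Birec

open Birec

/-!
Let `ρ` be a representation of a monoid by finitely many operators, and let `ρ e` have minimal
nonzero rank. Each `e g e` with `ρ (e g e) ≠ 0` acts on the range of `ρ e` by an automorphism, and
these automorphisms form a finite group. Call `e` nondegenerate if the range of `ρ e` generates the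
representation and its kernel contains no nonzero subrepresentation; then the lattice of
subrepresentations is controlled by that finite group.

If `ρ` is irreducible, `e` is nondegenerate, so every coefficient `g ↦ f (ρ g x)` is a combination
of functions `g ↦ f (ρ (e a g b e) x)`. Such a function is a combination of the indicators of the
fibers `{g | ρ (e a g b e) = h}` with `h ≠ 0`. By finiteness of the group, `h` can be multiplied
back to `ρ (e a)` on the right and to `ρ (b e)` on the left, so that the fiber is birecurrent.
Evaluation at the empty word turns the elements of a syntactic space into such coefficients.

Conversely, if `σ` is birecurrent then every `e` acting nontrivially on the syntactic space of `σ`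
is nondegenerate: recurrence of `σ` gives generation by the range, recurrence of the reversal gives
the condition on the kernel. Maschke's theorem for the finite group then splits off every
subrepresentation, and semisimplicity passes to sums and submodules.
-/

namespace Birec

open scoped MonoidAlgebra

theorem finite_range_of_factorsThrough {α β γ : Type*} {f : α → β} {g : α → γ}
    (hf : (Set.range f).Finite) (h : Function.FactorsThrough g f) : (Set.range g).Finite := by
  rcases isEmpty_or_nonempty α with _ | ⟨⟨a⟩⟩
  · exact Set.finite_range g
  · refine (hf.image (Function.extend f g fun _ => g a)).subset ?_
    rintro _ ⟨x, rfl⟩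
    exact ⟨f x, ⟨x, rfl⟩, h.extend_apply _ x⟩

section GreenFiber

variable {G H M : Type*} [Monoid G] [Monoid H] [Monoid M]

/-- `S` is the set of all `g` such that `φ (a * g * b)` equals some fixed `h`, where `h` lies in
the Green `R`-class of `φ a` and in the Green `L`-class of `φ b`. Only one of the two divisibility
conditions is recorded in each case: the other one is automatic when `S` is nonempty. -/
def IsGreenFiber (φ : G →* M) (S : Set G) : Prop :=
  ∃ (a b : G) (h : M), (∃ z, h * φ z = φ a) ∧ (∃ z, φ z * h = φ b) ∧ S = {g | φ (a * g * b) = h}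

theorem IsGreenFiber.comp_mulEquiv_op {φ : G →* M} {S : Set G} (hS : IsGreenFiber φ S)
    (f : H ≃* Gᵐᵒᵖ) : IsGreenFiber (φ.op.comp f.toMonoidHom) ((fun x => (f x).unop) ⁻¹' S) := by
  obtain ⟨a, b, h, ⟨z, hz⟩, ⟨z', hz'⟩, rfl⟩ := hS
  refine ⟨f.symm (.op b), f.symm (.op a), .op h, ⟨f.symm (.op z'), ?_⟩, ⟨f.symm (.op z), ?_⟩, ?_⟩
  · simpa using! congrArg MulOpposite.op hz'
  · simpa using! congrArg MulOpposite.op hz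
  · ext x
    have hx : φ.op.comp f.toMonoidHom (f.symm (.op b) * x * f.symm (.op a)) =
        .op (φ (a * (f x).unop * b)) := by simp [mul_assoc]
    rw [Set.mem_ofPred_eq, hx, MulOpposite.op_inj]
    rfl

variable {A : Type*}

theorem IsGreenFiber.recurrent {φ : FreeMonoid A →* M} (hφ : (Set.range φ).Finite)
    {S : Set (FreeMonoid A)} (hS : IsGreenFiber φ S) : Recurrent (FreeMonoid.ofList ⁻¹' S) := by
  obtain ⟨a, b, h, ⟨z, hz⟩, -, rfl⟩ := hS
  refine ⟨finite_range_of_factorsThrough (f := φ ∘ FreeMonoid.ofList)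
    (hφ.subset (Set.range_comp_subset_range _ _)) fun u v huv => ?_, fun u v ⟨x, hx⟩ _ => ?_⟩
  · ext w
    simp_all [leftQuot, FreeMonoid.ofList_append]
  · have hx' : φ (a * .ofList (u ++ x) * b) = h := hx
    have hloop : φ a * φ (.ofList u) * φ (.ofList x) * φ b * φ z = φ a := by
      rw [← hx'] at hz
      simpa [FreeMonoid.ofList_append, mul_assoc] using hz
    have hstep (w : List A) : φ (a * .ofList (u ++ (x ++ b.toList ++ z.toList ++ v) ++ w) * b) =
        φ (a * .ofList (v ++ w) * b) := by
      simp [FreeMonoid.ofList_append, ← mul_assoc, hloop]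
    exact ⟨_, Set.ext fun w => Eq.congr_left (hstep w)⟩

/-- Reversal of words, as an isomorphism onto the opposite monoid. -/
def reverseMulEquiv (A : Type*) : FreeMonoid A ≃* (FreeMonoid A)ᵐᵒᵖ where
  toFun w := .op w.reverse
  invFun w := w.unop.reverse
  left_inv w := by simp
  right_inv w := by simp
  map_mul' u v := by simp [FreeMonoid.reverse_mul]

theorem finite_range_op_comp {φ : G →* M} (hφ : (Set.range φ).Finite) (f : H ≃* Gᵐᵒᵖ) :
    (Set.range (φ.op.comp f.toMonoidHom)).Finite := by
  refine (hφ.image MulOpposite.op).subset ?_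
  rintro _ ⟨x, rfl⟩
  exact ⟨_, ⟨(f x).unop, rfl⟩, rfl⟩

theorem IsGreenFiber.birecurrent {φ : FreeMonoid A →* M} (hφ : (Set.range φ).Finite)
    {S : Set (FreeMonoid A)} (hS : IsGreenFiber φ S) : Birecurrent (FreeMonoid.ofList ⁻¹' S) :=
  ⟨hS.recurrent hφ, (hS.comp_mulEquiv_op (reverseMulEquiv A)).recurrent
    (finite_range_op_comp hφ _)⟩

end GreenFiber

section Maschke

variable {k U : Type*} [Field k] [CharZero k] [AddCommGroup U] [Module k U]

theorem exists_isCompl_of_finite_submonoid {S : Submonoid (U ≃ₗ[k] U)}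
    (hS : (S : Set (U ≃ₗ[k] U)).Finite) {N : Submodule k U} (hN : ∀ γ ∈ S, ∀ x ∈ N, γ x ∈ N) :
    ∃ N' : Submodule k U, IsCompl N N' ∧ ∀ γ ∈ S, ∀ x ∈ N', γ x ∈ N' := by
  have hclosure : (Subgroup.closure (S : Set (U ≃ₗ[k] U))).toSubmonoid = S := by
    rw [Subgroup.closure_toSubmonoid_of_isOfFinOrder, Submonoid.closure_eq]
    exact fun γ hγ => finite_powers.1 (hS.subset (Submonoid.powers_le.2 hγ))
  obtain ⟨Γ, hΓ⟩ : ∃ Γ : Subgroup (U ≃ₗ[k] U), Γ.toSubmonoid = S := ⟨_, hclosure⟩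
  subst hΓ
  have : Finite Γ := hS
  let ρ : Representation k Γ U :=
    (LinearEquiv.automorphismGroup.toLinearMapMonoidHom).comp Γ.subtype
  have hρ : Representation.IsSemisimpleRepresentation ρ := inferInstance
  obtain ⟨N', hN'⟩ := hρ.exists_isCompl ⟨N, fun γ x hx => hN γ γ.2 x hx⟩
  refine ⟨N'.toSubmodule, ⟨disjoint_iff.2 ?_, codisjoint_iff.2 ?_⟩,
    fun γ hγ x hx => N'.apply_mem_toSubmodule ⟨γ, hγ⟩ hx⟩
  · exact congrArg Subrepresentation.toSubmodule hN'.inf_eq_bot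
  · exact congrArg Subrepresentation.toSubmodule hN'.sup_eq_top

end Maschke

section Orbit

variable {k G V : Type*} [CommRing k] [Monoid G] [AddCommGroup V] [Module k V]
  (ρ : Representation k G V)

/-- The smallest subrepresentation containing `P`. -/
def orbitSpan (P : Submodule k V) : Subrepresentation ρ where
  toSubmodule := ⨆ g, P.map (ρ g)
  apply_mem_toSubmodule g := by
    change _ ≤ (⨆ g, P.map (ρ g)).comap (ρ g)
    exact iSup_le fun g' => Submodule.map_le_iff_le_comap.2 fun x hx =>
      Submodule.mem_iSup_of_mem (g * g') ⟨x, hx, by simp⟩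

/-- The largest subrepresentation contained in `P`. -/
def orbitCore (P : Submodule k V) : Subrepresentation ρ where
  toSubmodule := ⨅ g, P.comap (ρ g)
  apply_mem_toSubmodule g x hx := by
    simp only [Submodule.mem_iInf, Submodule.mem_comap] at hx ⊢
    exact fun a => by simpa using hx (a * g)

/-- The automorphisms of the subspace `U` that are restrictions of operators `ρ g`. -/
def inducedAut (U : Submodule k V) : Submonoid (U ≃ₗ[k] U) where
  carrier := {γ | ∃ g, ∀ x, (γ x : V) = ρ g x}
  one_mem' := ⟨1, by simp⟩
  mul_mem' := by
    rintro γ δ ⟨g, hg⟩ ⟨h, hh⟩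
    exact ⟨g * h, fun x => by simp [hg, hh]⟩

variable {ρ}

theorem le_orbitSpan (P : Submodule k V) : P ≤ (orbitSpan ρ P).toSubmodule := fun x hx =>
  Submodule.mem_iSup_of_mem 1 ⟨x, hx, by simp⟩

theorem orbitCore_le (P : Submodule k V) : (orbitCore ρ P).toSubmodule ≤ P := fun x hx => by
  simpa using (Submodule.mem_iInf _).1 hx 1

theorem mem_orbitCore {P : Submodule k V} {x : V} : x ∈ orbitCore ρ P ↔ ∀ g, ρ g x ∈ P :=
  Submodule.mem_iInf _

theorem finite_inducedAut (hρ : (Set.range ρ).Finite) (U : Submodule k V) :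
    (inducedAut ρ U : Set (U ≃ₗ[k] U)).Finite := by
  choose! g hg using fun (γ : U ≃ₗ[k] U) (hγ : γ ∈ inducedAut ρ U) => hγ
  refine Set.Finite.of_finite_image (f := fun γ => ρ (g γ)) (hρ.subset ?_) fun γ hγ δ hδ h => ?_
  · rintro _ ⟨γ, -, rfl⟩
    exact ⟨_, rfl⟩
  · ext x
    rw [hg γ hγ, hg δ hδ]
    exact LinearMap.congr_fun h x

end Orbit

section MinRank

variable {k G V : Type*} [Field k] [Monoid G] [AddCommGroup V] [Module k V]
  (ρ : Representation k G V)

/-- `ρ e` has the least rank among the nonzero operators `ρ g`. -/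
def IsMinRank (e : G) : Prop :=
  ρ e ≠ 0 ∧ ∀ g, ρ g ≠ 0 →
    Module.finrank k (LinearMap.range (ρ e)) ≤ Module.finrank k (LinearMap.range (ρ g))

theorem exists_isMinRank [Nontrivial V] : ∃ e, IsMinRank ρ e := by
  let rank (g : G) := Module.finrank k (LinearMap.range (ρ g))
  have hne : {g | ρ g ≠ 0}.Nonempty := ⟨1, by simp⟩
  exact ⟨Function.argminOn rank _ hne, Function.argminOn_mem rank _ hne,
    fun g hg => Function.argminOn_le rank _ hg⟩

variable {ρ} [FiniteDimensional k V] {e : G}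

theorem IsMinRank.map_range_eq (he : IsMinRank ρ e) {g : G} (h : ρ (e * g * e) ≠ 0) :
    (LinearMap.range (ρ e)).map (ρ (e * g)) = LinearMap.range (ρ e) := by
  have hle : LinearMap.range (ρ (e * g * e)) ≤ LinearMap.range (ρ e) := by
    rw [mul_assoc, map_mul]
    exact LinearMap.range_comp_le_range _ _
  rw [← LinearMap.range_comp, ← Module.End.mul_eq_comp, ← map_mul]
  exact Submodule.eq_of_le_of_finrank_le hle (he.2 _ h)

theorem IsMinRank.exists_mem_inducedAut (he : IsMinRank ρ e) {g : G} (h : ρ (e * g * e) ≠ 0) :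
    ∃ γ ∈ inducedAut ρ (LinearMap.range (ρ e)), ∀ x, (γ x : V) = ρ (e * g) x := by
  set U := LinearMap.range (ρ e)
  have hmap : U.map (ρ (e * g)) = U := he.map_range_eq h
  let f : U →ₗ[k] U := (ρ (e * g)).restrict (Submodule.map_le_iff_le_comap.1 hmap.le)
  have hf : Function.Surjective f := fun y => by
    obtain ⟨x, hx, hxy⟩ := hmap.ge y.2
    exact ⟨⟨x, hx⟩, Subtype.ext hxy⟩
  exact ⟨.ofBijective f ⟨LinearMap.injective_iff_surjective.2 hf, hf⟩, ⟨e * g, fun _ => rfl⟩,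
    fun _ => rfl⟩

theorem IsMinRank.exists_pow_mul_eq (he : IsMinRank ρ e) (hρ : (Set.range ρ).Finite) {g : G}
    (h : ρ (e * g * e) ≠ 0) : ∃ n, ρ ((e * g) ^ (n + 1) * e) = ρ e := by
  obtain ⟨γ, hγ, hγg⟩ := he.exists_mem_inducedAut h
  have hfin : IsOfFinOrder γ :=
    finite_powers.1 ((finite_inducedAut hρ _).subset (Submonoid.powers_le.2 hγ))
  have hpow : ∀ n x, ((γ ^ n) x : V) = ρ ((e * g) ^ n) x := by
    intro n
    induction n with
    | zero => simp
    | succ n ih => simp [pow_succ', hγg, ih]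
  obtain ⟨n, hn, hγn⟩ := isOfFinOrder_iff_pow_eq_one.1 hfin
  refine ⟨n - 1, LinearMap.ext fun x => ?_⟩
  rw [Nat.sub_add_cancel hn, map_mul, Module.End.mul_apply]
  simpa [hγn] using (hpow n ⟨ρ e x, x, rfl⟩).symm

theorem IsMinRank.exists_mul_right_eq (he : IsMinRank ρ e) (hρ : (Set.range ρ).Finite) {g : G}
    (h : ρ (e * g * e) ≠ 0) : ∃ z, ρ (e * g * e) * ρ z = ρ e := by
  obtain ⟨n, hn⟩ := he.exists_pow_mul_eq hρ h
  refine ⟨(g * e) ^ n, ?_⟩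
  rw [← map_mul, ← hn, pow_succ', mul_assoc (e * g), mul_assoc (e * g), mul_pow_mul]

theorem IsMinRank.exists_mul_left_eq (he : IsMinRank ρ e) (hρ : (Set.range ρ).Finite) {g : G}
    (h : ρ (e * g * e) ≠ 0) : ∃ z, ρ z * ρ (e * g * e) = ρ e := by
  obtain ⟨n, hn⟩ := he.exists_pow_mul_eq hρ h
  refine ⟨(e * g) ^ n, ?_⟩
  rw [← map_mul, ← hn, pow_succ, mul_assoc _ (e * g)]

end MinRank

section Nondegenerate

variable {k G V : Type*} [CommRing k] [Monoid G] [AddCommGroup V] [Module k V]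

/-- The image of `ρ e` generates the representation and its kernel contains no nonzero
subrepresentation. -/
structure IsNondegenerate (ρ : Representation k G V) (e : G) : Prop where
  orbitSpan_range_eq_top : orbitSpan ρ (LinearMap.range (ρ e)) = ⊤
  orbitCore_ker_eq_bot : orbitCore ρ (LinearMap.ker (ρ e)) = ⊥

variable {ρ : Representation k G V} {e : G}

theorem IsNondegenerate.eq_zero (he : IsNondegenerate ρ e) {x : V} (hx : ∀ g, ρ (e * g) x = 0) :
    x = 0 := by
  have hx' : x ∈ orbitCore ρ (LinearMap.ker (ρ e)) :=
    mem_orbitCore.2 fun g => by simpa using hx g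
  rw [he.orbitCore_ker_eq_bot] at hx'
  exact (Submodule.mem_bot k).1 hx'

theorem IsNondegenerate.eq_top (he : IsNondegenerate ρ e) {P : Submodule k V}
    (hP : ∀ g x, ρ (g * e) x ∈ P) : P = ⊤ := by
  refine eq_top_mono ?_ (congrArg Subrepresentation.toSubmodule he.orbitSpan_range_eq_top)
  refine iSup_le fun g => Submodule.map_le_iff_le_comap.2 ?_
  rintro _ ⟨x, rfl⟩
  simpa using hP g x

end Nondegenerate

section Semisimple

variable {k G V : Type*} [Field k] [Monoid G] [AddCommGroup V] [Module k V]
  {ρ : Representation k G V} {e : G}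

theorem isNondegenerate_of_isIrreducible [ρ.IsIrreducible] (he : ρ e ≠ 0) :
    IsNondegenerate ρ e where
  orbitSpan_range_eq_top := by
    refine (eq_bot_or_eq_top _).resolve_left fun h => he (LinearMap.range_eq_bot.1 ?_)
    exact eq_bot_mono (le_orbitSpan _) (congrArg Subrepresentation.toSubmodule h)
  orbitCore_ker_eq_bot := by
    refine (eq_bot_or_eq_top _).resolve_right fun h => he (LinearMap.ker_eq_top.1 ?_)
    exact eq_top_mono (orbitCore_le _) (congrArg Subrepresentation.toSubmodule h)

variable [FiniteDimensional k V]

theorem IsMinRank.apply_mem_of_mem_orbitSpan (he : IsMinRank ρ e)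
    {N : Submodule k (LinearMap.range (ρ e))}
    (hN : ∀ γ ∈ inducedAut ρ (LinearMap.range (ρ e)), ∀ x ∈ N, γ x ∈ N) (g : G) {x : V}
    (hx : x ∈ orbitSpan ρ (N.map (Submodule.subtype _))) :
    ρ (e * g) x ∈ N.map (Submodule.subtype _) := by
  suffices (orbitSpan ρ (N.map (Submodule.subtype _))).toSubmodule ≤
    (N.map (Submodule.subtype _)).comap (ρ (e * g)) from this hx
  refine iSup_le fun g' => Submodule.map_le_iff_le_comap.2 ?_
  rintro _ ⟨p, hp, rfl⟩
  rw [Submodule.mem_comap, Submodule.mem_comap, ← Module.End.mul_apply, ← map_mul, mul_assoc]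
  by_cases h : ρ (e * (g * g') * e) = 0
  · obtain ⟨_, q, rfl⟩ := p
    rw [Submodule.subtype_apply, ← Module.End.mul_apply, ← map_mul, h]
    exact zero_mem _
  · obtain ⟨γ, hγ, hγg⟩ := he.exists_mem_inducedAut h
    exact ⟨γ p, hN γ hγ p hp, hγg p⟩

theorem IsMinRank.isSemisimpleRepresentation [CharZero k] (he : IsMinRank ρ e)
    (hρ : (Set.range ρ).Finite) (hnd : IsNondegenerate ρ e) : ρ.IsSemisimpleRepresentation := by
  refine ⟨fun X => ?_⟩
  set U := LinearMap.range (ρ e)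
  obtain ⟨N, hN, hNinv⟩ := exists_isCompl_of_finite_submonoid (finite_inducedAut hρ U)
    (N := X.toSubmodule.comap U.subtype) fun γ ⟨g, hg⟩ x hx => by
      simpa [hg] using X.apply_mem_toSubmodule g hx
  refine ⟨orbitSpan ρ (N.map U.subtype), disjoint_iff.2 (eq_bot_iff.2 ?_), codisjoint_iff.2 ?_⟩
  · rintro x ⟨hxX, hxN⟩
    refine (Submodule.mem_bot k).2 (hnd.eq_zero fun g => ?_)
    obtain ⟨y, hyN, hy⟩ := he.apply_mem_of_mem_orbitSpan hNinv g hxN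
    have hyX : y ∈ X.toSubmodule.comap U.subtype := by
      rw [Submodule.mem_comap, hy]
      exact X.apply_mem_toSubmodule _ hxX
    rw [← hy, Submodule.disjoint_def.1 hN.disjoint y hyX hyN, map_zero]
  · refine Subrepresentation.toSubmodule_injective (hnd.eq_top fun g x => ?_)
    obtain ⟨a, ha, b, hb, hab⟩ := Submodule.mem_sup.1
      (hN.sup_eq_top.ge (Submodule.mem_top (x := (⟨ρ e x, x, rfl⟩ : U))))
    rw [map_mul, Module.End.mul_apply, ← show (a + b : V) = ρ e x from congrArg Subtype.val hab]
    exact (X ⊔ orbitSpan ρ _).apply_mem_toSubmodule g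
      (Submodule.add_mem_sup ha (le_orbitSpan _ ⟨b, hb, rfl⟩))

theorem isSemisimpleRepresentation_of_isNondegenerate [CharZero k] (hρ : (Set.range ρ).Finite)
    (h : ∀ e, ρ e ≠ 0 → IsNondegenerate ρ e) : ρ.IsSemisimpleRepresentation := by
  rcases subsingleton_or_nontrivial V with _ | _
  · have : Subsingleton (Subrepresentation ρ) :=
      Subrepresentation.toSubmodule_injective.subsingleton
    exact ⟨fun X => ⟨X, disjoint_iff.2 (Subsingleton.elim _ _),
      codisjoint_iff.2 (Subsingleton.elim _ _)⟩⟩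
  · obtain ⟨e, he⟩ := exists_isMinRank ρ
    exact he.isSemisimpleRepresentation hρ (h e he.1)

end Semisimple

section Coefficient

/-- The space spanned by the indicator functions of the Green fibers of `φ`. -/
def greenSpan (k : Type*) [Semiring k] {G M : Type*} [Monoid G] [Monoid M] (φ : G →* M) :
    Submodule k (G → k) :=
  Submodule.span k ((fun S => S.indicator 1) '' {S | IsGreenFiber φ S})

variable {k G V : Type*} [Field k] [Monoid G] [AddCommGroup V] [Module k V]
  [FiniteDimensional k V] {ρ : Representation k G V} {e : G}

theorem IsMinRank.isGreenFiber (he : IsMinRank ρ e) (hρ : (Set.range ρ).Finite) {a b g : G}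
    (h : ρ (e * a * g * (b * e)) ≠ 0) :
    IsGreenFiber ρ {g' | ρ (e * a * g' * (b * e)) = ρ (e * a * g * (b * e))} := by
  have hg : e * a * g * (b * e) = e * (a * g * b) * e := by simp only [mul_assoc]
  rw [hg] at h ⊢
  obtain ⟨z, hz⟩ := he.exists_mul_right_eq hρ h
  obtain ⟨z', hz'⟩ := he.exists_mul_left_eq hρ h
  exact ⟨_, _, _, ⟨z * a, by rw [map_mul ρ z, ← mul_assoc, hz, map_mul]⟩,
    ⟨b * z', by rw [map_mul ρ b, mul_assoc, hz', map_mul]⟩, rfl⟩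

theorem IsMinRank.sandwich_mem_greenSpan (he : IsMinRank ρ e) (hρ : (Set.range ρ).Finite)
    (f : Module.Dual k V) (x : V) (a b : G) :
    (fun g => f (ρ (e * a * g * (b * e)) x)) ∈ greenSpan k ρ := by
  classical
  have hsum : (fun g => f (ρ (e * a * g * (b * e)) x)) = ∑ h ∈ hρ.toFinset,
      f (h x) • {g | ρ (e * a * g * (b * e)) = h}.indicator (1 : G → k) := by
    ext g
    simp only [Finset.sum_apply, Pi.smul_apply, Set.indicator_apply, Set.mem_ofPred_eq,
      Pi.one_apply, smul_eq_mul, mul_ite, mul_one, mul_zero, Finset.sum_ite_eq]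
    rw [if_pos (hρ.mem_toFinset.2 ⟨_, rfl⟩)]
  rw [hsum]
  refine Submodule.sum_mem _ fun h _ => ?_
  by_cases hS : {g | ρ (e * a * g * (b * e)) = h} = ∅
  · rw [hS, Set.indicator_empty', smul_zero]
    exact zero_mem _
  by_cases h0 : h = 0
  · simp [h0]
  obtain ⟨g, rfl⟩ := Set.nonempty_iff_ne_empty.2 hS
  exact Submodule.smul_mem _ _ (Submodule.subset_span ⟨_, he.isGreenFiber hρ h0, rfl⟩)

theorem IsMinRank.coefficient_mem_greenSpan (he : IsMinRank ρ e) (hρ : (Set.range ρ).Finite)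
    (hnd : IsNondegenerate ρ e) (f : Module.Dual k V) (x : V) :
    (fun g => f (ρ g x)) ∈ greenSpan k ρ := by
  let coeff : Module.Dual k V →ₗ[k] V →ₗ[k] G → k :=
    LinearMap.mk₂ k (fun f x g => f (ρ g x)) (fun _ _ _ => rfl) (fun _ _ _ => rfl)
      (fun _ _ _ => by ext; simp) (fun _ _ _ => by ext; simp)
  have hleft (f : Module.Dual k V) (a : G) (x : V) :
      coeff (f ∘ₗ ρ (e * a)) x ∈ greenSpan k ρ := by
    suffices (greenSpan k ρ).comap (coeff (f ∘ₗ ρ (e * a))) = ⊤ from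
      this.ge Submodule.mem_top
    refine hnd.eq_top fun b y => ?_
    convert! he.sandwich_mem_greenSpan hρ f y a b using 2
    simp [coeff]
  let D : Submodule k (Module.Dual k V) := (greenSpan k ρ).comap (coeff.flip x)
  suffices D = ⊤ from this.ge Submodule.mem_top
  rw [← Subspace.dualCoannihilator_dualAnnihilator_eq (W := D),
    Submodule.dualAnnihilator_eq_top_iff, Submodule.eq_bot_iff]
  refine fun y hy => hnd.eq_zero fun a => (Module.forall_dual_apply_eq_zero_iff k _).1 fun f => ?_
  exact (Submodule.mem_dualCoannihilator y).1 hy _ (show f ∘ₗ ρ (e * a) ∈ D from hleft f a x)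

end Coefficient

theorem exists_fin_isAtom_iSupIndep {R M : Type*} [Ring R] [AddCommGroup M] [Module R M]
    (N : Submodule R M) [IsSemisimpleModule R N] [IsNoetherian R N] :
    ∃ (n : ℕ) (Y : Fin n → Submodule R M), (∀ i, IsAtom (Y i)) ∧ iSupIndep Y ∧ ⨆ i, Y i = N := by
  obtain ⟨s, hind, hsup, hsimple⟩ := IsSemisimpleModule.exists_sSupIndep_sSup_simples_eq_top R N
  have : Finite s := WellFoundedGT.finite_of_sSupIndep hind
  let φ : Fin (Nat.card s) ≃ s := (Finite.equivFin s).symm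
  refine ⟨_, fun i => (φ i : Submodule R N).map N.subtype, fun i => ?_, ?_, ?_⟩
  · have := hsimple _ (φ i).2
    exact isSimpleModule_iff_isAtom.1
      (IsSimpleModule.congr ((φ i).1.equivMapOfInjective _ N.subtype_injective).symm)
  · intro i
    simpa only [Submodule.map_iSup, Function.comp_apply] using!
      Submodule.disjoint_map N.subtype_injective (((sSupIndep_iff _).1 hind).comp φ.injective i)
  · rw [← Submodule.map_iSup, φ.iSup_comp (g := fun x : s => (x : Submodule R N)),
      ← sSup_eq_iSup', hsup, Submodule.map_top, Submodule.range_subtype]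

section Subrepresentation

variable {k G V : Type*} [Field k] [Monoid G] [AddCommGroup V] [Module k V]
  {ρ : Representation k G V}

/-- The `k[G]`-module of the restricted representation is the corresponding `k[G]`-submodule. -/
def asModuleEquivAsSubmodule (W : Subrepresentation ρ) :
    W.toRepresentation.asModule ≃ₗ[k[G]] W.asSubmodule where
  toFun x := x
  invFun x := x
  map_add' _ _ := rfl
  map_smul' r x := by
    induction r using MonoidAlgebra.induction_linear with
    | zero => exact (zero_smul k[G] x).trans (zero_smul k[G] (A := W.asSubmodule) x).symm
    | add r s hr hs =>
      exact (add_smul r s x).trans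
        ((congrArg₂ (· + ·) hr hs).trans (add_smul (M := W.asSubmodule) r s x).symm)
    | single g c =>
      rw [Representation.single_smul]
      exact Subtype.ext (Representation.single_smul ρ c g _).symm

theorem isIrreducible_toRepresentation_iff {W : Subrepresentation ρ} :
    W.toRepresentation.IsIrreducible ↔ IsAtom W := by
  rw [Representation.irreducible_iff_isSimpleModule_asModule,
    (asModuleEquivAsSubmodule W).isSimpleModule_iff, isSimpleModule_iff_isAtom]
  exact Subrepresentation.subrepresentationSubmoduleOrderIso.isAtom_iff W

theorem isSemisimpleRepresentation_toRepresentation_iff {W : Subrepresentation ρ} :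
    W.toRepresentation.IsSemisimpleRepresentation ↔ IsSemisimpleModule k[G] W.asSubmodule := by
  rw [Representation.isSemisimpleRepresentation_iff_isSemisimpleModule_asModule]
  exact (asModuleEquivAsSubmodule W).isSemisimpleModule_iff

theorem exists_fin_isAtom_iSupIndep_toSubmodule (W : Subrepresentation ρ)
    [IsSemisimpleModule k[G] W.asSubmodule] [FiniteDimensional k W.toSubmodule] :
    ∃ (n : ℕ) (Y : Fin n → Subrepresentation ρ), (∀ i, IsAtom (Y i)) ∧
      iSupIndep (fun i => (Y i).toSubmodule) ∧ ⨆ i, (Y i).toSubmodule = W.toSubmodule := by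
  have : IsNoetherian k W.asSubmodule := inferInstanceAs (IsNoetherian k W.toSubmodule)
  have : IsNoetherian k[G] W.asSubmodule := isNoetherian_of_tower k inferInstance
  obtain ⟨n, Y, hY, hind, hsup⟩ := exists_fin_isAtom_iSupIndep W.asSubmodule
  let r := Submodule.restrictScalarsLatticeHom k k[G] ρ.asModule
  refine ⟨n, fun i => .ofSubmodule' (Y i),
    fun i => (Subrepresentation.subrepresentationSubmoduleOrderIso.symm.isAtom_iff _).2 (hY i),
    fun i => ?_, ?_⟩
  · have := hind i
    rw [Submodule.disjoint_def] at this ⊢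
    exact fun x hx hx' => this x hx ((map_iSup₂ r fun j (_ : j ≠ i) => Y j).ge hx')
  · exact (map_iSup r Y).symm.trans (congrArg r hsup)

end Subrepresentation

section Shift

variable {A : Type*}

/-- The shift operators, as a representation. Since `τ · (u v) = (τ · u) · v`, words act on the
right, which makes it a representation of the opposite of the free monoid. -/
noncomputable def shiftRep (A : Type*) : Representation ℚ (FreeMonoid A)ᵐᵒᵖ (List A → ℚ) where
  toFun g := shiftOp g.unop.toList
  map_one' := rfl
  map_mul' _ _ := LinearMap.ext fun τ => funext fun _ => congrArg τ (List.append_assoc _ _ _)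

/-- An invariant subspace, as a subrepresentation. -/
def InvariantSub.toSubrepresentation {W : Submodule ℚ (List A → ℚ)} (hW : InvariantSub W) :
    Subrepresentation (shiftRep A) :=
  ⟨W, fun g x hx => hW x hx g.unop.toList⟩

theorem invariantSub_toSubmodule (W : Subrepresentation (shiftRep A)) :
    InvariantSub W.toSubmodule :=
  fun _ hx u => W.apply_mem_toSubmodule (.op (.ofList u)) hx

theorem irreducibleSub_toSubmodule_iff {W : Subrepresentation (shiftRep A)} :
    IrreducibleSub W.toSubmodule ↔ IsAtom W := by
  have hbot {X : Subrepresentation (shiftRep A)} : X.toSubmodule = ⊥ ↔ X = ⊥ :=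
    Subrepresentation.toSubmodule_injective.eq_iff (b := ⊥)
  refine ⟨fun ⟨hne, h⟩ => ⟨fun hW => hne (hbot.2 hW), fun X hX => ?_⟩,
    fun h => ⟨fun hW => h.1 (hbot.1 hW), fun X hXW hX => ?_⟩⟩
  · refine hbot.1 ((h _ hX.le (invariantSub_toSubmodule X)).resolve_right fun hXW => hX.ne ?_)
    exact Subrepresentation.toSubmodule_injective hXW
  · exact (h.le_iff.1 (show hX.toSubrepresentation ≤ W from hXW)).imp hbot.2
      (congrArg Subrepresentation.toSubmodule)

variable {σ : List A → ℚ}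

theorem self_mem_synSpace (σ : List A → ℚ) : σ ∈ synSpace σ := Submodule.subset_span ⟨[], rfl⟩

/-- The syntactic space, as a subrepresentation of the space of series. -/
def synSubrep (σ : List A → ℚ) : Subrepresentation (shiftRep A) where
  toSubmodule := synSpace σ
  apply_mem_toSubmodule g := by
    change synSpace σ ≤ (synSpace σ).comap (shiftRep A g)
    refine Submodule.span_le.2 ?_
    rintro _ ⟨u, rfl⟩
    refine Submodule.subset_span ⟨u ++ g.unop.toList, ?_⟩
    exact funext fun v => congrArg σ (List.append_assoc _ _ _)

theorem synSubrep_le {W : Subrepresentation (shiftRep A)} (h : σ ∈ W) : synSubrep σ ≤ W := by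
  refine Submodule.span_le.2 ?_
  rintro _ ⟨u, rfl⟩
  exact invariantSub_toSubmodule W σ h u

theorem SeriesRecognizable.finiteDimensional_synSpace (hσ : SeriesRecognizable σ) :
    FiniteDimensional ℚ (synSpace σ) :=
  FiniteDimensional.span_of_finite ℚ hσ

theorem SeriesRecognizable.finite_range_toRepresentation (hσ : SeriesRecognizable σ)
    {W : Subrepresentation (shiftRep A)} (hW : W ≤ synSubrep σ) :
    (Set.range W.toRepresentation).Finite := by
  let Q := Set.range fun u => shiftOp u σ
  have : Finite Q := hσ
  have hQ (g) (q : Q) : shiftRep A g q ∈ Q := by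
    obtain ⟨_, u, rfl⟩ := q
    exact ⟨u ++ g.unop.toList, funext fun v => congrArg σ (List.append_assoc _ _ _)⟩
  refine finite_range_of_factorsThrough (f := fun g (q : Q) => (⟨shiftRep A g q, hQ g q⟩ : Q))
    (Set.toFinite _) fun g h hgh => ?_
  have hspan : Set.EqOn (shiftRep A g) (shiftRep A h) (synSpace σ) :=
    LinearMap.eqOn_span fun q hq => congrArg Subtype.val (congrFun hgh ⟨q, hq⟩)
  exact LinearMap.ext fun x => Subtype.ext (hspan (hW x.2))

end Shift

section Coefficients

variable {A : Type*} {σ : List A → ℚ}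

/-- The space spanned by the characteristic series of the birecurrent languages. -/
noncomputable def birecurrentSpan (A : Type*) : Submodule ℚ (List A → ℚ) :=
  Submodule.span ℚ (charFun '' {L | Birecurrent L})

theorem mem_birecurrentSpan_iff : σ ∈ birecurrentSpan A ↔
    ∃ (n : ℕ) (c : Fin n → ℚ) (L : Fin n → Set (List A)),
      (∀ i, Birecurrent (L i)) ∧ σ = ∑ i, c i • charFun (L i) := by
  rw [birecurrentSpan, Submodule.mem_span_set']
  constructor
  · rintro ⟨n, c, g, rfl⟩
    choose L hL hLg using fun i => (g i).2
    exact ⟨n, c, L, hL, by simp only [hLg]⟩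
  · rintro ⟨n, c, L, hL, rfl⟩
    exact ⟨n, c, fun i => ⟨_, L i, hL i, rfl⟩, rfl⟩

theorem comp_op_mem_birecurrentSpan {M : Type*} [Monoid M] {φ : (FreeMonoid A)ᵐᵒᵖ →* M}
    (hφ : (Set.range φ).Finite) {c : (FreeMonoid A)ᵐᵒᵖ → ℚ} (hc : c ∈ greenSpan ℚ φ) :
    (fun w => c (.op (.ofList w))) ∈ birecurrentSpan A := by
  let pullback : ((FreeMonoid A)ᵐᵒᵖ → ℚ) →ₗ[ℚ] (List A → ℚ) :=
    LinearMap.funLeft ℚ ℚ fun w => .op (.ofList w)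
  suffices greenSpan ℚ φ ≤ (birecurrentSpan A).comap pullback from this hc
  refine Submodule.span_le.2 ?_
  rintro _ ⟨S, hS, rfl⟩
  have hS' := hS.comp_mulEquiv_op (MulEquiv.opOp (FreeMonoid A))
  exact Submodule.subset_span ⟨_, hS'.birecurrent (finite_range_op_comp hφ _), rfl⟩

theorem SeriesRecognizable.toSubmodule_le_birecurrentSpan (hσ : SeriesRecognizable σ)
    {W : Subrepresentation (shiftRep A)} (hW : IsAtom W) (hWσ : W ≤ synSubrep σ) :
    W.toSubmodule ≤ birecurrentSpan A := fun x hx => by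
  have := isIrreducible_toRepresentation_iff.2 hW
  have : FiniteDimensional ℚ (synSubrep σ).toSubmodule := hσ.finiteDimensional_synSpace
  have : FiniteDimensional ℚ W.toSubmodule := Submodule.finiteDimensional_of_le hWσ
  have : Nontrivial W.toSubmodule :=
    Submodule.nontrivial_iff_ne_bot.2 (irreducibleSub_toSubmodule_iff.2 hW).1
  have hfin := hσ.finite_range_toRepresentation hWσ
  obtain ⟨e, he⟩ := exists_isMinRank W.toRepresentation
  have hx_coeff := he.coefficient_mem_greenSpan hfin (isNondegenerate_of_isIrreducible he.1)
    (LinearMap.proj (φ := fun _ : List A => ℚ) [] ∘ₗ W.toSubmodule.subtype) ⟨x, hx⟩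
  convert! comp_op_mem_birecurrentSpan hfin hx_coeff using 2 with w
  exact congrArg x (List.append_nil w).symm

theorem CompletelyReducibleSeries.mem_birecurrentSpan (h : CompletelyReducibleSeries σ)
    (hσ : SeriesRecognizable σ) : σ ∈ birecurrentSpan A := by
  obtain ⟨n, W, hW, -, hsup⟩ := h
  refine (hsup.ge.trans (iSup_le fun i => ?_)) (self_mem_synSpace σ)
  obtain ⟨hle, hinv, hirr⟩ := hW i
  exact hσ.toSubmodule_le_birecurrentSpan (W := hinv.toSubrepresentation)
    (irreducibleSub_toSubmodule_iff.1 hirr) hle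

end Coefficients

section Birecurrent

variable {A : Type*} {σ : List A → ℚ}

theorem exists_dual_of_mem_synSpace {x : List A → ℚ} (hx : x ∈ synSpace σ) :
    ∃ f : Module.Dual ℚ (List A → ℚ), ∀ s, x s = f (shiftOp s.reverse (seriesRev σ)) := by
  induction hx using Submodule.span_induction with
  | mem x hx =>
    obtain ⟨v, rfl⟩ := hx
    exact ⟨LinearMap.proj v.reverse, fun s => by simp [shiftOp, seriesRev]⟩
  | zero => exact ⟨0, fun _ => rfl⟩
  | add x y _ _ hx hy =>
    obtain ⟨f, hf⟩ := hx
    obtain ⟨g, hg⟩ := hy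
    exact ⟨f + g, fun s => congrArg₂ _ (hf s) (hg s)⟩
  | smul c x _ hx =>
    obtain ⟨f, hf⟩ := hx
    exact ⟨c • f, fun s => congrArg _ (hf s)⟩

theorem exists_apply_ne_zero {e : (FreeMonoid A)ᵐᵒᵖ} (he : (synSubrep σ).toRepresentation e ≠ 0) :
    ∃ u w : List A, σ (u ++ (e.unop.toList ++ w)) ≠ 0 := by
  contrapose! he
  have h : Set.EqOn (shiftRep A e) (0 : Module.End ℚ (List A → ℚ)) (synSpace σ) := by
    refine LinearMap.eqOn_span ?_
    rintro _ ⟨u, rfl⟩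
    exact funext (he u)
  exact LinearMap.ext fun x => Subtype.ext (h x.2)

theorem SeriesRecurrent.orbitSpan_range_eq_top (hσ : SeriesRecurrent σ) {e : (FreeMonoid A)ᵐᵒᵖ}
    (he : (synSubrep σ).toRepresentation e ≠ 0) :
    orbitSpan (synSubrep σ).toRepresentation
      (LinearMap.range ((synSubrep σ).toRepresentation e)) = ⊤ := by
  set ρ := (synSubrep σ).toRepresentation
  obtain ⟨u, w, huw⟩ := exists_apply_ne_zero he
  let q (v : List A) : synSpace σ := ⟨shiftOp v σ, Submodule.subset_span ⟨v, rfl⟩⟩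
  have hq (v z : List A) : q (v ++ z) = ρ (.op (.ofList z)) (q v) :=
    Subtype.ext (funext fun _ => congrArg σ (List.append_assoc _ _ _))
  have hue : q (u ++ e.unop.toList) ∈ orbitSpan ρ (LinearMap.range (ρ e)) :=
    le_orbitSpan _ ⟨q u, (hq u e.unop.toList).symm⟩
  have hσ0 : shiftOp [] σ ≠ 0 := fun h => huw (congrFun h _)
  obtain ⟨z, hz⟩ := hσ.2 (u ++ e.unop.toList) []
    (fun h => huw (by simpa [shiftOp] using congrFun h w)) hσ0
  have hσmem : q [] ∈ orbitSpan ρ (LinearMap.range (ρ e)) := by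
    rw [show q [] = q (u ++ e.unop.toList ++ z) from Subtype.ext hz.symm, hq]
    exact Subrepresentation.apply_mem_toSubmodule _ _ hue
  refine Subrepresentation.toSubmodule_injective (eq_top_iff.2 ?_)
  refine (Submodule.span_span_coe_preimage (R := ℚ)).ge.trans (Submodule.span_le.2 ?_)
  rintro ⟨_, _⟩ ⟨v, rfl⟩
  exact Subrepresentation.apply_mem_toSubmodule _ (.op (.ofList v)) hσmem

theorem SeriesRecurrent.orbitCore_ker_eq_bot (hσ : SeriesRecurrent (seriesRev σ))
    {e : (FreeMonoid A)ᵐᵒᵖ} (he : (synSubrep σ).toRepresentation e ≠ 0) :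
    orbitCore (synSubrep σ).toRepresentation
      (LinearMap.ker ((synSubrep σ).toRepresentation e)) = ⊥ := by
  obtain ⟨u, w, huw⟩ := exists_apply_ne_zero he
  refine eq_bot_iff.2 fun x hx => (Submodule.mem_bot ℚ).2 (Subtype.ext (funext fun s => ?_))
  obtain ⟨f, hf⟩ := exists_dual_of_mem_synSpace x.2
  rw [hf]
  by_cases hs : shiftOp s.reverse (seriesRev σ) = 0
  · rw [hs, map_zero]
    rfl
  obtain ⟨z, hz⟩ := hσ.2 (e.unop.toList ++ w).reverse s.reverse
    (fun h => huw (by simpa [shiftOp, seriesRev] using congrFun h u.reverse)) hs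
  have hxz := congrFun (congrArg Subtype.val (mem_orbitCore.1 hx (.op (.ofList z.reverse)))) w
  rw [← hz]
  have := hf (z.reverse ++ (e.unop.toList ++ w))
  rw [List.reverse_append, List.reverse_reverse] at this
  exact this.symm.trans hxz

theorem SeriesBirecurrent.isSemisimpleModule (hσ : SeriesBirecurrent σ) :
    IsSemisimpleModule ℚ[(FreeMonoid A)ᵐᵒᵖ] (synSubrep σ).asSubmodule := by
  have : FiniteDimensional ℚ (synSubrep σ).toSubmodule := hσ.1.1.finiteDimensional_synSpace
  exact isSemisimpleRepresentation_toRepresentation_iff.1 <|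
    isSemisimpleRepresentation_of_isNondegenerate (hσ.1.1.finite_range_toRepresentation le_rfl)
      fun _ he => ⟨hσ.1.orbitSpan_range_eq_top he, hσ.2.orbitCore_ker_eq_bot he⟩

end Birecurrent

section Language

variable {A : Type*} {σ : List A → ℚ} {S : Set (List A)}

theorem charFun_ne_zero_iff : charFun S ≠ 0 ↔ S.Nonempty := by
  rw [Set.nonempty_iff_ne_empty, charFun, Ne, Set.indicator_eq_zero', Pi.one_def,
    Function.support_const one_ne_zero, Set.univ_disjoint]

theorem Recognizable.seriesRecognizable (hS : Recognizable S) : SeriesRecognizable (charFun S) :=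
  finite_range_of_factorsThrough hS fun _ _ h => congrArg charFun h

theorem Recurrent.seriesRecurrent (hS : Recurrent S) : SeriesRecurrent (charFun S) :=
  ⟨hS.1.seriesRecognizable, fun u v hu hv =>
    (hS.2 u v (charFun_ne_zero_iff.1 hu) (charFun_ne_zero_iff.1 hv)).imp fun _ h =>
      congrArg charFun h⟩

theorem Birecurrent.seriesBirecurrent (hS : Birecurrent S) : SeriesBirecurrent (charFun S) :=
  ⟨hS.1.seriesRecurrent, hS.2.seriesRecurrent⟩

theorem SeriesRecognizable.completelyReducibleSeries (hσ : SeriesRecognizable σ)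
    [IsSemisimpleModule ℚ[(FreeMonoid A)ᵐᵒᵖ] (synSubrep σ).asSubmodule] :
    CompletelyReducibleSeries σ := by
  have : FiniteDimensional ℚ (synSubrep σ).toSubmodule := hσ.finiteDimensional_synSpace
  obtain ⟨n, Y, hY, hind, hsup⟩ := exists_fin_isAtom_iSupIndep_toSubmodule (synSubrep σ)
  exact ⟨n, _, fun i => ⟨(le_iSup (fun i => (Y i).toSubmodule) i).trans hsup.le,
    invariantSub_toSubmodule _, irreducibleSub_toSubmodule_iff.2 (hY i)⟩, hind, hsup⟩

theorem completelyReducibleSeries_of_mem_birecurrentSpan (hσ : SeriesRecognizable σ)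
    (h : σ ∈ birecurrentSpan A) : CompletelyReducibleSeries σ := by
  let W : Submodule ℚ[(FreeMonoid A)ᵐᵒᵖ] (shiftRep A).asModule :=
    ⨆ L ∈ {L : Set (List A) | Birecurrent L}, (synSubrep (charFun L)).asSubmodule
  have : IsSemisimpleModule ℚ[(FreeMonoid A)ᵐᵒᵖ] W :=
    isSemisimpleModule_biSup_of_isSemisimpleModule_submodule fun _ hL =>
      hL.seriesBirecurrent.isSemisimpleModule
  have hle : birecurrentSpan A ≤ (Subrepresentation.ofSubmodule' W).toSubmodule := by
    refine Submodule.span_le.2 ?_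
    rintro _ ⟨L, hL, rfl⟩
    exact le_biSup (fun L => (synSubrep (charFun L)).asSubmodule) hL (self_mem_synSpace (charFun L))
  have hσW : (synSubrep σ).asSubmodule ≤ W :=
    synSubrep_le (W := Subrepresentation.ofSubmodule' W) (hle h)
  have : IsSemisimpleModule ℚ[(FreeMonoid A)ᵐᵒᵖ] (synSubrep σ).asSubmodule :=
    IsSemisimpleModule.of_injective (M := W) (Submodule.inclusion hσW)
      (Submodule.inclusion_injective hσW)
  exact hσ.completelyReducibleSeries

end Language

end Birec

theorem completelyReducible_iff_linear_combination_general {A : Type*} {σ : List A → ℚ}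
    (hσ : SeriesRecognizable σ) :
    CompletelyReducibleSeries σ ↔
      ∃ (n : ℕ) (c : Fin n → ℚ) (L : Fin n → Set (List A)),
        (∀ i, Birecurrent (L i)) ∧ σ = ∑ i, c i • charFun (L i) := by
  rw [← mem_birecurrentSpan_iff]
  exact ⟨fun h => h.mem_birecurrentSpan hσ, completelyReducibleSeries_of_mem_birecurrentSpan hσ⟩

/-- **Theorem.** A recognizable language `S` is completely reducible over `ℚ` if and
only if its characteristic series is a `ℚ`-linear combination of characteristic series
of birecurrent languages. -/
theorem completelyReducible_iff_linear_combination {A : Type*} [Fintype A]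
    (S : Set (List A)) (hS : Recognizable S) :
    CompletelyReducibleLang S ↔
      ∃ (n : ℕ) (c : Fin n → ℚ) (L : Fin n → Set (List A)),
        (∀ i, Birecurrent (L i)) ∧ charFun S = ∑ i, c i • charFun (L i) :=
  completelyReducible_iff_linear_combination_general hS.seriesRecognizable
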